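/- arXiv:2009.14610 — 3 statements merged into one kernel-verified Lean document; each statement's English description precedes it below -/
import Mathlib

section
/- Let X be a random variable following a Poisson distribution with parameter λ > 0, and let M = max(1, λe). Then for every natural number k, the k-th moment of X satisfies E[X^k] ≤ k! · M^k. -/
/-!
The Poisson weights `p n` of rate `r` satisfy `(n + 1) * p (n + 1) = r * p n`, so
`E[X * f X] = r * E[f (X + 1)]`; in particular `E[X ^ (k + 1)] = r * E[(X + 1) ^ k]`.
If `E[X ^ j] ≤ j! * M ^ j` for all `j ≤ k`, then expanding `(X + 1) ^ k` leaves a truncated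
exponential series in `1 / M`, whence `E[(X + 1) ^ k] ≤ k! * M ^ k * exp (1 / M)`. The induction
closes as soon as `r * exp (1 / M) ≤ M`, which holds for `M = max 1 (r * e)` because `1 / M ≤ 1`.
-/

open MeasureTheory ProbabilityTheory
open scoped NNReal Nat

section ShiftedMoment

theorem sum_factorial_mul_pow_mul_pow_mul_choose_le {M c : ℝ} (hM : 0 < M) (hc : 0 ≤ c) (k : ℕ) :
    ∑ j ∈ Finset.range (k + 1), j ! * M ^ j * c ^ (k - j) * k.choose j ≤
      k ! * M ^ k * Real.exp (c / M) := by
  have term_eq : ∀ j ∈ Finset.range (k + 1),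
      j ! * M ^ j * c ^ (k - j) * k.choose j = k ! * M ^ k * ((c / M) ^ (k - j) / (k - j)!) := by
    intro j hj
    have hjk : j ≤ k := Finset.mem_range_succ_iff.mp hj
    rw [Nat.cast_choose ℝ hjk, ← Nat.add_sub_cancel' hjk, pow_add, Nat.add_sub_cancel_left, div_pow]
    field_simp
  calc ∑ j ∈ Finset.range (k + 1), j ! * M ^ j * c ^ (k - j) * k.choose j
      = k ! * M ^ k * ∑ i ∈ Finset.range (k + 1), (c / M) ^ i / i ! := by
        rw [Finset.sum_congr rfl term_eq, ← Finset.mul_sum,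
          ← Finset.sum_range_reflect (fun i => (c / M) ^ i / (i ! : ℝ))]
        simp only [Nat.add_sub_cancel]
    _ ≤ k ! * M ^ k * Real.exp (c / M) := by
        gcongr
        exact Real.sum_le_exp_of_nonneg (by positivity) _

theorem integral_add_const_pow_le {Ω : Type*} [MeasurableSpace Ω] {μ : Measure Ω} {X : Ω → ℝ}
    {M c : ℝ} {k : ℕ} (hM : 0 < M) (hc : 0 ≤ c) (hX : ∀ j ≤ k, Integrable (fun ω => X ω ^ j) μ)
    (hle : ∀ j ≤ k, ∫ ω, X ω ^ j ∂μ ≤ j ! * M ^ j) :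
    ∫ ω, (X ω + c) ^ k ∂μ ≤ k ! * M ^ k * Real.exp (c / M) := by
  calc ∫ ω, (X ω + c) ^ k ∂μ
      = ∑ j ∈ Finset.range (k + 1), (∫ ω, X ω ^ j ∂μ) * c ^ (k - j) * k.choose j := by
        simp_rw [add_pow]
        rw [integral_finsetSum]
        · simp only [integral_mul_const]
        · intro j hj
          exact ((hX j (Finset.mem_range_succ_iff.mp hj)).mul_const _).mul_const _
    _ ≤ ∑ j ∈ Finset.range (k + 1), j ! * M ^ j * c ^ (k - j) * k.choose j := by
        gcongr with j hj
        exact hle j (Finset.mem_range_succ_iff.mp hj)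
    _ ≤ k ! * M ^ k * Real.exp (c / M) := sum_factorial_mul_pow_mul_pow_mul_choose_le hM hc k

end ShiftedMoment

section Poisson

variable {E : Type*} [NormedAddCommGroup E] [NormedSpace ℝ E]

theorem poisson_weight_succ_mul (r : ℝ) (n : ℕ) :
    Real.exp (-r) * r ^ (n + 1) / (n + 1)! * (n + 1 : ℕ) = r * (Real.exp (-r) * r ^ n / n !) := by
  rw [Nat.factorial_succ, Nat.cast_mul, pow_succ']
  field_simp

theorem integrable_natCast_smul_poissonMeasure {r : ℝ≥0} {f : ℕ → E}
    (hf : Integrable (fun n => f (n + 1)) (Po(r))) :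
    Integrable (fun n : ℕ => (n : ℝ) • f n) (Po(r)) := by
  rw [integrable_poissonMeasure_iff] at hf ⊢
  rw [← summable_nat_add_iff 1]
  refine (hf.mul_left (r : ℝ)).congr fun n => ?_
  rw [norm_smul, Real.norm_natCast, ← mul_assoc, ← mul_assoc, poisson_weight_succ_mul]

theorem integral_natCast_smul_poissonMeasure [FiniteDimensional ℝ E] (r : ℝ≥0) (f : ℕ → E) :
    ∫ n : ℕ, (n : ℝ) • f n ∂Po(r) = (r : ℝ) • ∫ n, f (n + 1) ∂Po(r) := by
  rw [integral_poissonMeasure, integral_poissonMeasure, ← tsum_const_smul'']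
  have support_subset : Function.support
      (fun n : ℕ => (Real.exp (-r) * r ^ n / n !) • (n : ℝ) • f n) ⊆ Set.range Nat.succ := by
    rintro (_ | n) hn
    · simp at hn
    · exact ⟨n, rfl⟩
  rw [← Nat.succ_injective.tsum_eq support_subset]
  refine tsum_congr fun n => ?_
  rw [smul_smul, smul_smul, Nat.succ_eq_add_one, poisson_weight_succ_mul]

theorem integrable_add_const_pow_poissonMeasure (r : ℝ≥0) (c : ℝ) (k : ℕ) :
    Integrable (fun n : ℕ => ((n : ℝ) + c) ^ k) (Po(r)) := by
  -- Lowering the exponent by one shifts the argument, so the shift `c` must vary in the induction.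
  induction k generalizing c with
  | zero => simp
  | succ k ih =>
    have h_shift : Integrable (fun n : ℕ => (n : ℝ) * ((n : ℝ) + c) ^ k) (Po(r)) := by
      refine integrable_natCast_smul_poissonMeasure ((ih (c + 1)).congr (.of_forall fun n => ?_))
      simp only [Nat.cast_add_one, add_assoc, add_comm c]
    simp only [pow_succ', add_mul]
    exact h_shift.add ((ih c).const_mul c)

theorem integral_pow_succ_poissonMeasure (r : ℝ≥0) (k : ℕ) :
    ∫ n : ℕ, (n : ℝ) ^ (k + 1) ∂Po(r) =
      r * ∫ n : ℕ, ((n : ℝ) + 1) ^ k ∂Po(r) := by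
  simpa only [pow_succ', smul_eq_mul, Nat.cast_add_one] using
    integral_natCast_smul_poissonMeasure r fun n => (n : ℝ) ^ k

end Poisson

theorem poisson_moment_bound_general {r : ℝ≥0} {M : ℝ} (hM : 0 < M)
    (hrM : r * Real.exp (1 / M) ≤ M) (k : ℕ) :
    ∫ n : ℕ, (n : ℝ) ^ k ∂Po(r) ≤ k ! * M ^ k := by
  induction k using Nat.strong_induction_on with
  | _ k ih =>
    rcases k with _ | k
    · simp
    have h_shifted : ∫ n : ℕ, ((n : ℝ) + 1) ^ k ∂Po(r) ≤
        k ! * M ^ k * Real.exp (1 / M) :=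
      integral_add_const_pow_le hM zero_le_one
        (fun j _ => by simpa using integrable_add_const_pow_poissonMeasure r 0 j)
        fun j hj => ih j (Nat.lt_succ_of_le hj)
    calc ∫ n : ℕ, (n : ℝ) ^ (k + 1) ∂Po(r)
        = r * ∫ n : ℕ, ((n : ℝ) + 1) ^ k ∂Po(r) := integral_pow_succ_poissonMeasure r k
      _ ≤ r * (k ! * M ^ k * Real.exp (1 / M)) := by gcongr
      _ = k ! * M ^ k * (r * Real.exp (1 / M)) := by ring
      _ ≤ k ! * M ^ k * M := by gcongr
      _ = k ! * M ^ (k + 1) := by ring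
      _ ≤ (k + 1)! * M ^ (k + 1) := by gcongr; exact k.le_succ

/-- Moment bound for a Poisson random variable: if `X ~ Poisson(λ)` with `λ > 0`
and `M = max 1 (λ * e)`, then `E[X^k] ≤ k! * M^k`, where the expectation is
written as the sum `∑ n, n^k * P(X = n)` with `P(X = n) = exp(-λ) λ^n / n!`. -/
theorem poisson_moment_bound (lam : ℝ) (hlam : 0 < lam) (M : ℝ)
    (hM : M = max 1 (lam * Real.exp 1)) (k : ℕ) :
    ∑' n : ℕ, (n : ℝ) ^ k * (Real.exp (-lam) * lam ^ n / n.factorial) ≤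
      (k.factorial : ℝ) * M ^ k := by
  have one_le_M : 1 ≤ M := hM ▸ le_max_left _ _
  have exp_inv_le : lam * Real.exp (1 / M) ≤ M :=
    calc lam * Real.exp (1 / M) ≤ lam * Real.exp 1 := by
          gcongr
          exact div_le_self zero_le_one one_le_M
      _ ≤ M := hM ▸ le_max_right _ _
  lift lam to ℝ≥0 using hlam.le
  simpa only [integral_poissonMeasure, smul_eq_mul, mul_comm] using
    poisson_moment_bound_general (zero_lt_one.trans_le one_le_M) exp_inv_le k
end

section
/- Let d ≥ 1 and let u, v ∈ ℝ^d have nonnegative coordinates. Denote by ‖·‖ the ℓ¹ norm on ℝ^d, i.e., ‖x‖ = Σ_{i=1}^d |x_i|. Then ‖ u/(1+‖u‖) − v/(1+‖v‖) ‖ ≤ ‖u − v‖ + 2‖u − v‖/(1 + ‖v‖). -/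
theorem inv_smul_sub_inv_smul {K M : Type*} [DivisionRing K] [AddCommGroup M] [Module K M]
    {a b : K} (ha : a ≠ 0) (hb : b ≠ 0) (x y : M) :
    a⁻¹ • x - b⁻¹ • y = b⁻¹ • ((x - y) + (b - a) • a⁻¹ • x) := by
  rw [sub_smul, smul_inv_smul₀ ha, sub_add_sub_cancel', smul_sub, inv_smul_smul₀ hb]

section NormedSpace

variable {E : Type*} [SeminormedAddCommGroup E] [NormedSpace ℝ E]

theorem norm_inv_one_add_norm_smul_le_one (x : E) : ‖(1 + ‖x‖)⁻¹ • x‖ ≤ 1 := by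
  have hx : 0 < 1 + ‖x‖ := by positivity
  rw [norm_smul_of_nonneg (inv_nonneg.2 hx.le), inv_mul_le_one₀ hx]
  exact le_add_of_nonneg_left zero_le_one

theorem normalized_weights_diff_bound_general (u v : E) :
    ‖(1 + ‖u‖)⁻¹ • u - (1 + ‖v‖)⁻¹ • v‖ ≤ 2 * ‖u - v‖ / (1 + ‖v‖) := by
  have hu : 0 < 1 + ‖u‖ := by positivity
  have hv : 0 < 1 + ‖v‖ := by positivity
  have norm_correction_le : ‖(‖v‖ - ‖u‖) • (1 + ‖u‖)⁻¹ • u‖ ≤ ‖u - v‖ :=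
    calc ‖(‖v‖ - ‖u‖) • (1 + ‖u‖)⁻¹ • u‖
        = |‖v‖ - ‖u‖| * ‖(1 + ‖u‖)⁻¹ • u‖ := norm_smul _ _
      _ ≤ |‖v‖ - ‖u‖| :=
          mul_le_of_le_one_right (abs_nonneg _) (norm_inv_one_add_norm_smul_le_one u)
      _ ≤ ‖u - v‖ := norm_sub_rev u v ▸ abs_norm_sub_norm_le v u
  calc ‖(1 + ‖u‖)⁻¹ • u - (1 + ‖v‖)⁻¹ • v‖
      = ‖(u - v) + (‖v‖ - ‖u‖) • (1 + ‖u‖)⁻¹ • u‖ / (1 + ‖v‖) := by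
        rw [inv_smul_sub_inv_smul hu.ne' hv.ne', add_sub_add_left_eq_sub,
          norm_smul_of_nonneg (inv_nonneg.2 hv.le), inv_mul_eq_div]
    _ ≤ (‖u - v‖ + ‖u - v‖) / (1 + ‖v‖) := by
        gcongr
        exact norm_add_le_of_le le_rfl norm_correction_le
    _ = 2 * ‖u - v‖ / (1 + ‖v‖) := by rw [two_mul]

end NormedSpace

/-- Intermediate inequality in the proof of Lemma 1: for nonnegative vectors `u, v ∈ ℝ^d`
and the ℓ¹ norm `‖x‖ = ∑ i, |x i|`, one has
`‖u/(1+‖u‖) - v/(1+‖v‖)‖ ≤ ‖u - v‖ + 2‖u - v‖/(1 + ‖v‖)`. -/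
theorem normalized_weights_diff_bound (d : ℕ) (hd : 1 ≤ d) (u v : Fin d → ℝ)
    (hu : ∀ i, 0 ≤ u i) (hv : ∀ i, 0 ≤ v i) :
    ∑ i, |u i / (1 + ∑ j, |u j|) - v i / (1 + ∑ j, |v j|)| ≤
      (∑ i, |u i - v i|) + 2 * (∑ i, |u i - v i|) / (1 + ∑ j, |v j|) := by
  refine le_add_of_nonneg_of_le (Finset.sum_nonneg fun _ _ ↦ abs_nonneg _) ?_
  simpa [PiLp.norm_eq_of_L1, inv_mul_eq_div] using
    normalized_weights_diff_bound_general (WithLp.toLp 1 u) (WithLp.toLp 1 v)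
end

section
/- Let d ≥ 1, p ≥ 1, let τ, τ_s, ρ be real numbers with 0 ≤ 3τ_s τ ≤ ρ < 1, let s : ℕ → ℝ be positive with s(t)/s(t−1) ≤ τ_s for all t ≥ 1, and let φ : ℝ × ℝ^p → ℝ be nonnegative and such that for every θ ∈ ℝ^p the map x ↦ φ(x, θ) is τ-Lipschitz. For t ≥ 1, θ = (θ_1,…,θ_d) ∈ (ℝ^p)^d and X ∈ ℝ^d, define the Poisson parameter vector Λ_t(X) ∈ ℝ^d by Λ_t(X)_i = s(t) · φ(X_i/s(t−1), θ_i) / (1 + Σ_{j=1}^d φ(X_j/s(t−1), θ_j)). Then for all X, X' ∈ ℝ^d and all t ≥ 1, ‖Λ_t(X) − Λ_t(X')‖₁ ≤ ρ ‖X − X'‖₁. -/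
/-!
The normalization `N a = a / (1 + ∑ j, a j)` does not increase `ℓ¹` distances on the nonnegative
orthant. Let `A ≤ B` be the total masses of `a` and `b`. Then
`(1 + B) (N a - N b) = (a - b) + (B - A) N a`, where `|B - A| ≤ ‖a - b‖₁` and `N a` has total mass
`A / (1 + A) ≤ B`, so `(1 + B) ‖N a - N b‖₁ ≤ (1 + B) ‖a - b‖₁`. Rescaling inside and outside `φ`
multiplies the Lipschitz constant `τ` by `s t / s (t - 1) ≤ τs`.
-/

section BaselineNormalize

variable {ι 𝕜 : Type*} [Fintype ι] [Field 𝕜]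

/-- The share of the coordinate `i` in the total mass of `a` and a baseline of mass `1`. It turns
the vector of values of `φ` into the Poisson parameter vector, up to the factor `s t`. -/
def baselineNormalize (a : ι → 𝕜) (i : ι) : 𝕜 :=
  a i / (1 + ∑ j, a j)

theorem sum_baselineNormalize (a : ι → 𝕜) :
    ∑ i, baselineNormalize a i = (∑ i, a i) / (1 + ∑ i, a i) :=
  (Finset.sum_div _ _ _).symm

theorem baselineNormalize_sub_eq_div {a b : ι → 𝕜} (ha : 1 + ∑ j, a j ≠ 0)
    (hb : 1 + ∑ j, b j ≠ 0) (i : ι) :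
    baselineNormalize a i - baselineNormalize b i =
      (a i - b i + baselineNormalize a i * (∑ j, b j - ∑ j, a j)) / (1 + ∑ j, b j) := by
  unfold baselineNormalize
  field_simp
  ring

variable [LinearOrder 𝕜] [IsStrictOrderedRing 𝕜] {a b : ι → 𝕜}

theorem one_add_sum_pos (ha : 0 ≤ a) : 0 < 1 + ∑ i, a i :=
  add_pos_of_pos_of_nonneg one_pos (Finset.sum_nonneg fun i _ => ha i)

theorem baselineNormalize_nonneg (ha : 0 ≤ a) (i : ι) : 0 ≤ baselineNormalize a i :=
  div_nonneg (ha i) (one_add_sum_pos ha).le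

theorem sum_baselineNormalize_le_sum (ha : 0 ≤ a) : ∑ i, baselineNormalize a i ≤ ∑ i, a i := by
  have hA : 0 ≤ ∑ i, a i := Finset.sum_nonneg fun i _ => ha i
  rw [sum_baselineNormalize]
  exact div_le_self hA (le_add_of_nonneg_right hA)

theorem abs_baselineNormalize_sub_le (ha : 0 ≤ a) (hb : 0 ≤ b) (i : ι) :
    |baselineNormalize a i - baselineNormalize b i| ≤
      (|a i - b i| + baselineNormalize a i * ∑ j, |a j - b j|) / (1 + ∑ j, b j) := by
  have hA := one_add_sum_pos ha
  have hB := one_add_sum_pos hb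
  have hN := baselineNormalize_nonneg ha i
  have hAB : |∑ j, b j - ∑ j, a j| ≤ ∑ j, |a j - b j| := by
    rw [abs_sub_comm, ← Finset.sum_sub_distrib]
    exact Finset.abs_sum_le_sum_abs _ _
  rw [baselineNormalize_sub_eq_div hA.ne' hB.ne', abs_div, abs_of_pos hB]
  gcongr
  refine (abs_add_le _ _).trans ?_
  rw [abs_mul, abs_of_nonneg hN]
  gcongr

theorem sum_abs_baselineNormalize_sub_le (ha : 0 ≤ a) (hb : 0 ≤ b) :
    ∑ i, |baselineNormalize a i - baselineNormalize b i| ≤ ∑ i, |a i - b i| := by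
  wlog hab : ∑ i, a i ≤ ∑ i, b i generalizing a b
  · simpa only [abs_sub_comm] using this hb ha (le_of_not_ge hab)
  have hB := one_add_sum_pos hb
  have hN : ∑ i, baselineNormalize a i ≤ ∑ i, b i := (sum_baselineNormalize_le_sum ha).trans hab
  calc ∑ i, |baselineNormalize a i - baselineNormalize b i|
      ≤ ∑ i, (|a i - b i| + baselineNormalize a i * ∑ j, |a j - b j|) / (1 + ∑ j, b j) :=
        Finset.sum_le_sum fun i _ => abs_baselineNormalize_sub_le ha hb i
    _ = (1 + ∑ i, baselineNormalize a i) * (∑ i, |a i - b i|) / (1 + ∑ i, b i) := by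
        rw [← Finset.sum_div, Finset.sum_add_distrib, ← Finset.sum_mul, one_add_mul]
    _ ≤ (1 + ∑ i, b i) * (∑ i, |a i - b i|) / (1 + ∑ i, b i) := by gcongr
    _ = ∑ i, |a i - b i| := mul_div_cancel_left₀ _ hB.ne'

end BaselineNormalize

section Rescaling

variable {𝕜 : Type*} [Field 𝕜] [LinearOrder 𝕜] [IsStrictOrderedRing 𝕜] {f : 𝕜 → 𝕜} {τ : 𝕜}

theorem nonneg_of_abs_sub_le_mul_abs_sub (hf : ∀ x y, |f x - f y| ≤ τ * |x - y|) : 0 ≤ τ := by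
  simpa using (abs_nonneg _).trans (hf 1 0)

theorem mul_abs_sub_comp_div_le (hf : ∀ x y, |f x - f y| ≤ τ * |x - y|) {u v : 𝕜} (hu : 0 ≤ u)
    (hv : 0 < v) (x y : 𝕜) : u * |f (x / v) - f (y / v)| ≤ u / v * τ * |x - y| :=
  calc u * |f (x / v) - f (y / v)|
      ≤ u * (τ * |x / v - y / v|) := mul_le_mul_of_nonneg_left (hf _ _) hu
    _ = u / v * τ * |x - y| := by
        rw [← sub_div, abs_div, abs_of_pos hv]
        ring

end Rescaling

theorem intensity_map_contraction_general {ι Θ 𝕜 : Type*} [Fintype ι]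
    [Field 𝕜] [LinearOrder 𝕜] [IsStrictOrderedRing 𝕜]
    {τ τs ρ : 𝕜} (hρ : τs * τ ≤ ρ)
    {s : ℕ → 𝕜} (hs : ∀ t, 0 < s t) (hss : ∀ t, 1 ≤ t → s t / s (t - 1) ≤ τs)
    {φ : 𝕜 → Θ → 𝕜} (hφ0 : ∀ x θ, 0 ≤ φ x θ)
    (hφlip : ∀ (θ : Θ) (x y : 𝕜), |φ x θ - φ y θ| ≤ τ * |x - y|)
    (θ : ι → Θ) {t : ℕ} (ht : 1 ≤ t) (X X' : ι → 𝕜) :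
    ∑ i, |s t * φ (X i / s (t - 1)) (θ i) / (1 + ∑ j, φ (X j / s (t - 1)) (θ j)) -
          s t * φ (X' i / s (t - 1)) (θ i) / (1 + ∑ j, φ (X' j / s (t - 1)) (θ j))| ≤
      ρ * ∑ i, |X i - X' i| := by
  let a (Y : ι → 𝕜) (i : ι) : 𝕜 := φ (Y i / s (t - 1)) (θ i)
  have ha (Y : ι → 𝕜) : 0 ≤ a Y := fun i => hφ0 _ _
  have hcoord (i : ι) : s t * |a X i - a X' i| ≤ ρ * |X i - X' i| := by
    have hτ : 0 ≤ τ := nonneg_of_abs_sub_le_mul_abs_sub (hφlip (θ i))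
    have hst : s t / s (t - 1) * τ ≤ ρ := (mul_le_mul_of_nonneg_right (hss t ht) hτ).trans hρ
    exact (mul_abs_sub_comp_div_le (hφlip (θ i)) (hs t).le (hs (t - 1)) _ _).trans
      (mul_le_mul_of_nonneg_right hst (abs_nonneg _))
  calc _ = s t * ∑ i, |baselineNormalize (a X) i - baselineNormalize (a X') i| := by
        simp only [a, baselineNormalize, Finset.mul_sum, mul_div_assoc, ← mul_sub, abs_mul,
          abs_of_pos (hs t)]
    _ ≤ s t * ∑ i, |a X i - a X' i| :=
        mul_le_mul_of_nonneg_left (sum_abs_baselineNormalize_sub_le (ha X) (ha X')) (hs t).le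
    _ ≤ ρ * ∑ i, |X i - X' i| := by
        simpa only [Finset.mul_sum] using Finset.sum_le_sum fun i _ => hcoord i

/-- Contraction of the Poisson intensity map (deterministic core of Lemma 1):
under the conditions `0 ≤ 3 τ_s τ ≤ ρ < 1`, `s(t)/s(t-1) ≤ τ_s`, `φ ≥ 0` and
`x ↦ φ(x, θ)` `τ`-Lipschitz, the map
`Λ_t(X)_i = s(t) φ(X_i/s(t-1), θ_i) / (1 + ∑_j φ(X_j/s(t-1), θ_j))`
satisfies `‖Λ_t(X) - Λ_t(X')‖₁ ≤ ρ ‖X - X'‖₁`. -/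
theorem intensity_map_contraction (d p : ℕ) (hd : 1 ≤ d) (hp : 1 ≤ p)
    (τ τs ρ : ℝ) (h0 : 0 ≤ 3 * τs * τ) (hρ : 3 * τs * τ ≤ ρ) (hρ1 : ρ < 1)
    (s : ℕ → ℝ) (hs : ∀ t, 0 < s t) (hss : ∀ t, 1 ≤ t → s t / s (t - 1) ≤ τs)
    (φ : ℝ → (Fin p → ℝ) → ℝ) (hφ0 : ∀ x θ, 0 ≤ φ x θ)
    (hφlip : ∀ (θ : Fin p → ℝ) (x y : ℝ), |φ x θ - φ y θ| ≤ τ * |x - y|)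
    (θ : Fin d → Fin p → ℝ) (t : ℕ) (ht : 1 ≤ t) (X X' : Fin d → ℝ) :
    ∑ i, |s t * φ (X i / s (t - 1)) (θ i) / (1 + ∑ j, φ (X j / s (t - 1)) (θ j)) -
          s t * φ (X' i / s (t - 1)) (θ i) / (1 + ∑ j, φ (X' j / s (t - 1)) (θ j))| ≤
      ρ * ∑ i, |X i - X' i| :=
  intensity_map_contraction_general (by linarith) hs hss hφ0 hφlip θ ht X X'
end
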